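/- Fix n ≥ 1, d ≥ 1 and configurations x, y : Fin n → ℝ^d. For every unit vector θ ∈ ℝ^d and all θ-sorting permutations σ for x and τ for y, the squared Wasserstein distance is bounded above: W²(x,y) ≤ SWGG(x,y,θ;σ,τ). Consequently W²(x,y) ≤ min-SWGG(x,y), the infimum of SWGG(x,y,θ;σ,τ) over all unit vectors θ and all θ-sorting permutations σ, τ. -/

import Mathlib

open scoped RealInnerProductSpace

/-- The SWGG value associated to configurations `x, y` and permutations `σ, τ`:
`(1/n) Σ_i ‖x_{σ(i)} − y_{τ(i)}‖²`. -/
noncomputable def SWGG {n d : ℕ} (x y : Fin n → EuclideanSpace ℝ (Fin d))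
    (σ τ : Equiv.Perm (Fin n)) : ℝ :=
  (n : ℝ)⁻¹ * ∑ i, ‖x (σ i) - y (τ i)‖ ^ 2

/-- A permutation `σ` is θ-sorting for `x` if `i ↦ ⟨x_{σ(i)}, θ⟩` is nondecreasing. -/
def IsSorting {n d : ℕ} (θ : EuclideanSpace ℝ (Fin d))
    (x : Fin n → EuclideanSpace ℝ (Fin d)) (σ : Equiv.Perm (Fin n)) : Prop :=
  Monotone fun i => ⟪x (σ i), θ⟫

/-- Squared 2-Wasserstein distance between the uniform empirical measures of `x` and `y`:
`(1/n) · min_ρ Σ_i ‖x_i − y_{ρ(i)}‖²`. -/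
noncomputable def Wsq {n d : ℕ} (x y : Fin n → EuclideanSpace ℝ (Fin d)) : ℝ :=
  (n : ℝ)⁻¹ * ⨅ ρ : Equiv.Perm (Fin n), ∑ i, ‖x i - y (ρ i)‖ ^ 2

/-- `min-SWGG`: the infimum of `SWGG x y θ σ τ` over unit vectors `θ` and
θ-sorting permutations `σ` for `x`, `τ` for `y`. -/
noncomputable def minSWGG {n d : ℕ} (x y : Fin n → EuclideanSpace ℝ (Fin d)) : ℝ :=
  sInf { r : ℝ | ∃ θ : EuclideanSpace ℝ (Fin d), ∃ σ τ : Equiv.Perm (Fin n),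
    ‖θ‖ = 1 ∧ IsSorting θ x σ ∧ IsSorting θ y τ ∧ r = SWGG x y σ τ }

/-! Reindexing by `σ` shows that the plan pairing `x (σ i)` with `y (τ i)` is the permutation plan
`τ ∘ σ⁻¹`, one of the candidates in the minimum defining `W²`. -/

theorem ciInf_equiv_sum_le {ι κ μ M : Type*} [Fintype ι] [Finite κ] [Fintype μ]
    [AddCommMonoid M] [ConditionallyCompleteLattice M]
    (c : ι → κ → M) (σ : μ ≃ ι) (τ : μ ≃ κ) :
    ⨅ ρ : ι ≃ κ, ∑ i, c i (ρ i) ≤ ∑ j, c (σ j) (τ j) :=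
  calc ⨅ ρ : ι ≃ κ, ∑ i, c i (ρ i)
    _ ≤ ∑ i, c i ((σ.symm.trans τ) i) := ciInf_le (Set.finite_range _).bddBelow (σ.symm.trans τ)
    _ = ∑ j, c (σ j) ((σ.symm.trans τ) (σ j)) := (Equiv.sum_comp σ _).symm
    _ = ∑ j, c (σ j) (τ j) := by simp only [Equiv.trans_apply, Equiv.symm_apply_apply]

section

variable {n d : ℕ} (x y : Fin n → EuclideanSpace ℝ (Fin d))

theorem wsq_le_SWGG (σ τ : Equiv.Perm (Fin n)) : Wsq x y ≤ SWGG x y σ τ :=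
  mul_le_mul_of_nonneg_left (ciInf_equiv_sum_le (fun i j => ‖x i - y j‖ ^ 2) σ τ)
    (inv_nonneg.2 n.cast_nonneg)

theorem exists_isSorting (θ : EuclideanSpace ℝ (Fin d)) : ∃ σ, IsSorting θ x σ :=
  ⟨Tuple.sort fun i => ⟪x i, θ⟫, Tuple.monotone_sort fun i => ⟪x i, θ⟫⟩

variable {x y}

-- A unit vector exists and every direction can be sorted, so the set in `minSWGG` is nonempty and
-- its `sInf` is not the junk value `0`.
theorem le_minSWGG (hd : 1 ≤ d) {a : ℝ}
    (h : ∀ (θ : EuclideanSpace ℝ (Fin d)) (σ τ : Equiv.Perm (Fin n)),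
      ‖θ‖ = 1 → IsSorting θ x σ → IsSorting θ y τ → a ≤ SWGG x y σ τ) :
    a ≤ minSWGG x y := by
  have : Nonempty (Fin d) := Fin.pos_iff_nonempty.1 hd
  obtain ⟨θ, hθ⟩ := exists_norm_eq (EuclideanSpace ℝ (Fin d)) zero_le_one
  obtain ⟨σ, hσ⟩ := exists_isSorting x θ
  obtain ⟨τ, hτ⟩ := exists_isSorting y θ
  refine le_csInf ⟨_, θ, σ, τ, hθ, hσ, hτ, rfl⟩ ?_
  rintro _ ⟨θ', σ', τ', hθ', hσ', hτ', rfl⟩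
  exact h θ' σ' τ' hθ' hσ' hτ'

end

theorem wsq_le_SWGG_and_minSWGG_general {n d : ℕ} (hd : 1 ≤ d)
    (x y : Fin n → EuclideanSpace ℝ (Fin d)) :
    (∀ σ τ : Equiv.Perm (Fin n), Wsq x y ≤ SWGG x y σ τ) ∧ Wsq x y ≤ minSWGG x y :=
  ⟨wsq_le_SWGG x y, le_minSWGG hd fun _ σ τ _ _ _ => wsq_le_SWGG x y σ τ⟩

/-- The squared Wasserstein distance is bounded above by `SWGG` for every unit direction `θ`
and θ-sorting permutations, and consequently by `min-SWGG`. -/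
theorem wsq_le_SWGG_and_minSWGG {n d : ℕ} (hn : 1 ≤ n) (hd : 1 ≤ d)
    (x y : Fin n → EuclideanSpace ℝ (Fin d)) :
    (∀ (θ : EuclideanSpace ℝ (Fin d)) (σ τ : Equiv.Perm (Fin n)),
        ‖θ‖ = 1 → IsSorting θ x σ → IsSorting θ y τ → Wsq x y ≤ SWGG x y σ τ)
      ∧ Wsq x y ≤ minSWGG x y := by
  obtain ⟨h_perm, h_min⟩ := wsq_le_SWGG_and_minSWGG_general hd x y
  exact ⟨fun _ σ τ _ _ _ => h_perm σ τ, h_min⟩
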